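/- (Example 2: 4-qubit mixed entangled state.) Let e₀, e₁, e₂, e₃ be the standard basis of ℂ⁴ (identifying e₀ = |00⟩, e₃ = |11⟩), and for w ∈ ℂ⁴ let w wᴴ denote the matrix with entries w_j · conj(w_k). For every θ ∈ ℝ, the 2-setting, 4-outcome family ρ̃ : Fin 2 → Fin 4 → Matrix 4 4 ℂ given by: setting 0: ρ̃ 0 0 = (cos²θ/4) • (e₀+e₃)(e₀+e₃)ᴴ, ρ̃ 0 1 = (sin²θ/4) • (e₀+e₃)(e₀+e₃)ᴴ, ρ̃ 0 2 = (sin²θ/4) • (e₀−e₃)(e₀−e₃)ᴴ, ρ̃ 0 3 = (cos²θ/4) • (e₀−e₃)(e₀−e₃)ᴴ; setting 1: ρ̃ 1 0 = (1/8) • (e₀+i·e₃)(e₀+i·e₃)ᴴ, ρ̃ 1 1 = (1/8) • (e₀−i·e₃)(e₀−i·e₃)ᴴ, ρ̃ 1 2 = (1/8) • (e₀−i·e₃)(e₀−i·e₃)ᴴ, ρ̃ 1 3 = (1/8) • (e₀+i·e₃)(e₀+i·e₃)ᴴ; admits no LHS model (the EPR steering paradox '2_Q = 1_C' for the mixed state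 cos²θ|LC₄⟩⟨LC₄| + sin²θ|LC₄'⟩⟨LC₄'| of two linear cluster states under the zz and yx measurement settings). -/

import Mathlib

open Matrix BigOperators
open scoped ComplexOrder

noncomputable section

/-- A density matrix: positive semidefinite with trace 1. -/
def IsDensityMatrix {n : ℕ} (A : Matrix (Fin n) (Fin n) ℂ) : Prop :=
  A.PosSemidef ∧ A.trace = 1

/-- An unnormalized pure state: a nonnegative real multiple of a rank-one
projection `v vᴴ` onto a unit vector `v`. -/
def IsUnnormalizedPure {n : ℕ} (A : Matrix (Fin n) (Fin n) ℂ) : Prop :=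
  ∃ (c : ℝ) (v : Fin n → ℂ), 0 ≤ c ∧ star v ⬝ᵥ v = 1 ∧ A = c • vecMulVec v (star v)

/-- `A` is a positive real multiple of `B`. -/
def IsPosMultiple {n : ℕ} (A B : Matrix (Fin n) (Fin n) ℂ) : Prop :=
  ∃ c : ℝ, 0 < c ∧ A = c • B

/-- A local-hidden-state (LHS) model for a family of unnormalized conditional
states `ρt ℓ a` (setting `ℓ`, outcome `a`). -/
def HasLHSModel {n k : ℕ} {O : Type*} [Fintype O]
    (ρt : Fin k → O → Matrix (Fin n) (Fin n) ℂ) : Prop :=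
  ∃ (m : ℕ) (w : Fin m → ℝ) (ρ : Fin m → Matrix (Fin n) (Fin n) ℂ)
    (p : O → Fin k → Fin m → ℝ),
    (∀ ξ, 0 ≤ w ξ) ∧ ((∑ ξ, w ξ) = 1) ∧
    (∀ ξ, IsDensityMatrix (ρ ξ)) ∧
    (∀ a ℓ ξ, 0 ≤ p a ℓ ξ) ∧
    (∀ ℓ ξ, (∑ a, p a ℓ ξ) = 1) ∧
    (∀ ℓ a, ρt ℓ a = ∑ ξ, p a ℓ ξ • w ξ • ρ ξ)

/-- Off-diagonal real and imaginary parts of a density matrix cannot both be maximal. -/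
theorem density_offdiag (A : Matrix (Fin 4) (Fin 4) ℂ) (hA : IsDensityMatrix A) :
    |(A 0 3).re| + |(A 0 3).im| ≤ 3 / 4 := by
  obtain ⟨hp, ht⟩ := hA
  have hherm : A 3 0 = star (A 0 3) := (hp.1.apply 3 0).symm
  have hdiag : ∀ i, 0 ≤ (A i i).re := fun i => (Complex.le_def.1 hp.diag_nonneg).1
  have htr : (A 0 0).re + (A 1 1).re + (A 2 2).re + (A 3 3).re = 1 := by
    have := congrArg Complex.re ht
    simpa [Matrix.trace, Fin.sum_univ_four] using this
  have key : ∀ u v : ℝ, 0 ≤ (u ^ 2 + v ^ 2) * (A 0 0).re + (A 3 3).re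
      + 2 * (u * (A 0 3).re + v * (A 0 3).im) := by
    intro u v
    have h := (Complex.le_def.1 (hp.dotProduct_mulVec_nonneg ![(⟨u, v⟩ : ℂ), 0, 0, 1])).1
    simp [Matrix.mulVec, dotProduct, Fin.sum_univ_four, hherm] at h
    nlinarith [h]
  have h1 := key (3/5) (4/5)
  have h2 := key (3/5) (-4/5)
  have h3 := key (-3/5) (4/5)
  have h4 := key (-3/5) (-4/5)
  have h5 := key 1 0
  have h6 := key (-1) 0
  have d1 := hdiag 1
  have d2 := hdiag 2
  rcases abs_cases (A 0 3).re with ⟨e, _⟩ | ⟨e, _⟩ <;>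
  rcases abs_cases (A 0 3).im with ⟨f, _⟩ | ⟨f, _⟩ <;> rw [e, f] <;> linarith

/-- A signed mixture of responses is bounded by the absolute value. -/
theorem signed_bound (a b c d r w : ℝ) (ha : 0 ≤ a) (hb : 0 ≤ b) (hc : 0 ≤ c) (hd : 0 ≤ d)
    (hs : a + b + c + d = 1) (hw : 0 ≤ w) :
    a * (w * r) + b * (w * r) - c * (w * r) - d * (w * r) ≤ w * |r| := by
  have h1 : (a + b - c - d) * r ≤ |r| := by
    refine (le_abs_self _).trans ?_
    rw [abs_mul]
    have : |a + b - c - d| ≤ 1 := abs_le.2 ⟨by linarith, by linarith⟩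
    exact mul_le_of_le_one_left (abs_nonneg r) this
  nlinarith [mul_le_mul_of_nonneg_left h1 hw]

/-- Example 2, 4-qubit mixed entangled state: for any `θ`,
Bob's eight unnormalized conditional states (on his two qubits, dimension 4,
with `![1,0,0,1] = e₀ + e₃`, `![1,0,0,-1] = e₀ - e₃`,
`![1,0,0,Complex.I] = e₀ + i·e₃`, `![1,0,0,-Complex.I] = e₀ - i·e₃`)
for the mixed state `cos²θ|LC₄⟩⟨LC₄| + sin²θ|LC₄'⟩⟨LC₄'|` under the `zz` and
`yx` settings admit no LHS model (the paradox "2_Q = 1_C"). -/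
theorem example2_four_qubit_mixed (θ : ℝ)
    (ρt : Fin 2 → Fin 4 → Matrix (Fin 4) (Fin 4) ℂ)
    (h00 : ρt 0 0 = ((Real.cos θ) ^ 2 / 4 : ℝ) •
      vecMulVec ![1, 0, 0, 1] (star ![1, 0, 0, 1]))
    (h01 : ρt 0 1 = ((Real.sin θ) ^ 2 / 4 : ℝ) •
      vecMulVec ![1, 0, 0, 1] (star ![1, 0, 0, 1]))
    (h02 : ρt 0 2 = ((Real.sin θ) ^ 2 / 4 : ℝ) •
      vecMulVec ![1, 0, 0, -1] (star ![1, 0, 0, -1]))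
    (h03 : ρt 0 3 = ((Real.cos θ) ^ 2 / 4 : ℝ) •
      vecMulVec ![1, 0, 0, -1] (star ![1, 0, 0, -1]))
    (h10 : ρt 1 0 = (1 / 8 : ℝ) •
      vecMulVec ![1, 0, 0, Complex.I] (star ![1, 0, 0, Complex.I]))
    (h11 : ρt 1 1 = (1 / 8 : ℝ) •
      vecMulVec ![1, 0, 0, -Complex.I] (star ![1, 0, 0, -Complex.I]))
    (h12 : ρt 1 2 = (1 / 8 : ℝ) •
      vecMulVec ![1, 0, 0, -Complex.I] (star ![1, 0, 0, -Complex.I]))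
    (h13 : ρt 1 3 = (1 / 8 : ℝ) •
      vecMulVec ![1, 0, 0, Complex.I] (star ![1, 0, 0, Complex.I])) :
    ¬ HasLHSModel ρt := by
  rintro ⟨m, w, ρ, p, hw, hw1, hρ, hp, hp1, hm⟩
  have hre : ∀ a, (ρt 0 a 0 3).re = ∑ ξ, p a 0 ξ * (w ξ * (ρ ξ 0 3).re) := by
    intro a
    rw [hm 0 a]
    simp [Matrix.sum_apply]
  have him : ∀ a, (ρt 1 a 0 3).im = ∑ ξ, p a 1 ξ * (w ξ * (ρ ξ 0 3).im) := by
    intro a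
    rw [hm 1 a]
    simp [Matrix.sum_apply]
  have r0 := hre 0
  have r1 := hre 1
  have r2 := hre 2
  have r3 := hre 3
  have i0 := him 0
  have i1 := him 1
  have i2 := him 2
  have i3 := him 3
  rw [h00] at r0
  rw [h01] at r1
  rw [h02] at r2
  rw [h03] at r3
  rw [h10] at i0
  rw [h11] at i1
  rw [h12] at i2
  rw [h13] at i3
  simp only [Matrix.smul_apply, vecMulVec_apply, Complex.smul_re, Complex.smul_im, smul_eq_mul]
    at r0 r1 r2 r3 i0 i1 i2 i3
  simp at r0 r1 r2 r3 i0 i1 i2 i3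
  have hR : (1 : ℝ) / 2 ≤ ∑ ξ, w ξ * |(ρ ξ 0 3).re| := by
    have h := Finset.sum_le_sum (s := Finset.univ) fun ξ _ =>
      signed_bound (p 0 0 ξ) (p 1 0 ξ) (p 2 0 ξ) (p 3 0 ξ) (ρ ξ 0 3).re (w ξ)
        (hp _ _ _) (hp _ _ _) (hp _ _ _) (hp _ _ _)
        (by simpa [Fin.sum_univ_four] using hp1 0 ξ) (hw ξ)
    simp only [Finset.sum_add_distrib, Finset.sum_sub_distrib] at h
    linarith [Real.sin_sq_add_cos_sq θ]
  have hI : (1 : ℝ) / 2 ≤ ∑ ξ, w ξ * |(ρ ξ 0 3).im| := by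
    have h := Finset.sum_le_sum (s := Finset.univ) fun ξ _ =>
      signed_bound (p 1 1 ξ) (p 2 1 ξ) (p 0 1 ξ) (p 3 1 ξ) (ρ ξ 0 3).im (w ξ)
        (hp _ _ _) (hp _ _ _) (hp _ _ _) (hp _ _ _)
        (by have := hp1 1 ξ; rw [Fin.sum_univ_four] at this; linarith) (hw ξ)
    simp only [Finset.sum_add_distrib, Finset.sum_sub_distrib] at h
    linarith
  have hT : ∑ ξ, (w ξ * |(ρ ξ 0 3).re| + w ξ * |(ρ ξ 0 3).im|) ≤ ∑ ξ, w ξ * (3 / 4) :=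
    Finset.sum_le_sum fun ξ _ => by
      rw [← mul_add]
      exact mul_le_mul_of_nonneg_left (density_offdiag _ (hρ ξ)) (hw ξ)
  rw [Finset.sum_add_distrib, ← Finset.sum_mul, hw1] at hT
  linarith
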